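/- There exists κ = κ(n) > 0 such that every complete rotationally symmetric Riemannian (n+1)-manifold (M, g) not diffeomorphic to S¹ × S^n is κ-noncollapsed on all scales: whenever x₀ ∈ M and r > 0 satisfy |Rm| ≤ r⁻² on B(x₀, r), one has Vol(B(x₀, r)) ≥ κ r^{n+1}. -/

import Mathlib

open Set Filter MeasureTheory Metric

lemma ode_growth (I : Set ℝ) (hI : IsOpen I) (hc : I.OrdConnected) (ψ : ℝ → ℝ)
    (hpos : ∀ x ∈ I, 0 < ψ x) (hd : ContDiffOn ℝ (⊤ : ℕ∞) ψ I) (r₀ r : ℝ) (hr : 0 < r)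
    (hr0 : r₀ ∈ I)
    (hK : ∀ x ∈ I, |x - r₀| < r → |1 - (deriv ψ x) ^ 2| ≤ (ψ x) ^ 2 / r ^ 2) :
    ∀ x ∈ I, |x - r₀| < r →
      (1 - |x - r₀| / r) * (r + ψ x) ≤ r + ψ r₀ ∧
      (1 - |x - r₀| / r) * (r + ψ r₀) ≤ r + ψ x := by
  intro x hx hxr
  have hdiff : ∀ y ∈ I, DifferentiableAt ℝ ψ y := fun y hy =>
    (hd.differentiableOn (by simp)).differentiableAt (hI.mem_nhds hy)
  have hconv : Convex ℝ (I ∩ Ioo (r₀ - r) (r₀ + r)) :=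
    hc.convex.inter (convex_Ioo _ _)
  have key : ∀ y ∈ I ∩ Ioo (r₀ - r) (r₀ + r),
      HasDerivWithinAt (fun y => Real.log (r + ψ y)) (deriv ψ y / (r + ψ y))
        (I ∩ Ioo (r₀ - r) (r₀ + r)) y := by
    intro y hy
    have h1 := ((hdiff y hy.1).hasDerivAt.const_add r).log (by have := hpos y hy.1; positivity)
    exact h1.hasDerivWithinAt
  have hb : ∀ y ∈ I ∩ Ioo (r₀ - r) (r₀ + r), ‖deriv ψ y / (r + ψ y)‖ ≤ 1 / r := by
    intro y hy
    have hp := hpos y hy.1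
    have hk := hK y hy.1 (by rw [abs_lt]; constructor <;> linarith [hy.2.1, hy.2.2])
    rw [Real.norm_eq_abs, abs_div, abs_of_pos (by positivity : 0 < r + ψ y),
      div_le_div_iff₀ (by positivity) hr, one_mul]
    have h2 : (deriv ψ y) ^ 2 * r ^ 2 ≤ (r + ψ y) ^ 2 := by
      have h3 := (abs_le.1 hk).1
      have h4 : (deriv ψ y) ^ 2 ≤ 1 + (ψ y) ^ 2 / r ^ 2 := by linarith
      calc (deriv ψ y) ^ 2 * r ^ 2 ≤ (1 + (ψ y) ^ 2 / r ^ 2) * r ^ 2 := by gcongr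
        _ = r ^ 2 + (ψ y) ^ 2 := by field_simp
        _ ≤ _ := by nlinarith
    rw [← abs_of_pos hr, ← abs_mul, abs_of_pos hr]
    apply abs_le_of_sq_le_sq _ (by positivity)
    nlinarith
  have hxm : x ∈ I ∩ Ioo (r₀ - r) (r₀ + r) :=
    ⟨hx, by have := abs_lt.1 hxr; constructor <;> linarith⟩
  have hrm : r₀ ∈ I ∩ Ioo (r₀ - r) (r₀ + r) := ⟨hr0, by constructor <;> linarith⟩
  have hlip := hconv.norm_image_sub_le_of_norm_hasDerivWithin_le key hb hrm hxm
  simp only [Real.norm_eq_abs] at hlip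
  rw [one_div_mul_eq_div] at hlip
  have hp := hpos x hx
  have hp0 := hpos r₀ hr0
  have hA : 0 < r + ψ x := by positivity
  have hB : 0 < r + ψ r₀ := by positivity
  set t := |x - r₀| / r with ht
  have hexp : 1 - t ≤ Real.exp (-t) := by linarith [Real.add_one_le_exp (-t)]
  have hlip' := abs_le.1 hlip
  constructor
  · calc (1 - t) * (r + ψ x) ≤ Real.exp (-t) * (r + ψ x) := by gcongr
      _ = Real.exp (-t + Real.log (r + ψ x)) := by rw [Real.exp_add, Real.exp_log hA]
      _ ≤ Real.exp (Real.log (r + ψ r₀)) := by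
          apply Real.exp_le_exp.2; linarith [hlip'.2]
      _ = _ := Real.exp_log hB
  · calc (1 - t) * (r + ψ r₀) ≤ Real.exp (-t) * (r + ψ r₀) := by gcongr
      _ = Real.exp (-t + Real.log (r + ψ r₀)) := by rw [Real.exp_add, Real.exp_log hB]
      _ ≤ Real.exp (Real.log (r + ψ x)) := by
          apply Real.exp_le_exp.2; linarith [hlip'.1]
      _ = _ := Real.exp_log hA

lemma ode_main (I : Set ℝ) (hI : IsOpen I) (hc : I.OrdConnected) (ψ : ℝ → ℝ)
    (hpos : ∀ x ∈ I, 0 < ψ x) (hd : ContDiffOn ℝ (⊤ : ℕ∞) ψ I) (r₀ r : ℝ) (hr : 0 < r)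
    (hr0 : r₀ ∈ I)
    (hR : ∀ m > 0, ∀ x ≥ r₀, (∀ y ∈ I, r₀ ≤ y → y ≤ x → m ≤ ψ y) → x ∈ I)
    (hL : ∀ m > 0, ∀ x ≤ r₀, (∀ y ∈ I, y ≤ r₀ → x ≤ y → m ≤ ψ y) → x ∈ I)
    (hK : ∀ x ∈ I, |x - r₀| < r → |1 - (deriv ψ x) ^ 2| ≤ (ψ x) ^ 2 / r ^ 2) :
    (∀ x ∈ I, |x - r₀| ≤ r / 10 → ψ x ≤ 2 * (r + ψ r₀)) ∧
    ∃ c, ∀ x ∈ Icc c (c + r / 80), x ∈ I ∧ |x - r₀| ≤ r / 10 ∧ (r + ψ r₀) / 50 ≤ ψ x := by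
  have hg := ode_growth I hI hc ψ hpos hd r₀ r hr hr0 hK
  have hp0 := hpos r₀ hr0
  have hup : ∀ x ∈ I, |x - r₀| ≤ r / 10 → (9 / 10) * (r + ψ x) ≤ r + ψ r₀ := by
    intro x hx hxr
    have h1 := (hg x hx (by linarith)).1
    have h2 : |x - r₀| / r ≤ 1 / 10 := by rw [div_le_iff₀ hr]; linarith
    have := hpos x hx
    nlinarith
  refine ⟨fun x hx hxr => by linarith [hup x hx hxr], ?_⟩
  rcases le_or_gt (r / 20) (ψ r₀) with hcase | hcase
  · have hlow : ∀ x ∈ I, r₀ ≤ x → x ≤ r₀ + r / 80 → (r + ψ r₀) / 50 ≤ ψ x := by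
      intro x hx h1 h2
      have ha : |x - r₀| ≤ r / 80 := by rw [abs_of_nonneg (by linarith)]; linarith
      have h3 := (hg x hx (by linarith)).2
      have h4 : |x - r₀| / r ≤ 1 / 80 := by rw [div_le_iff₀ hr]; linarith
      nlinarith
    refine ⟨r₀, fun x hx => ?_⟩
    have hxI : x ∈ I := hR ((r + ψ r₀) / 50) (by positivity) x hx.1
      (fun y hy h1 h2 => hlow y hy h1 (h2.trans hx.2))
    refine ⟨hxI, ?_, hlow x hxI hx.1 hx.2⟩
    rw [abs_of_nonneg (by linarith [hx.1])]; linarith [hx.2]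
  · have hdiff : ∀ y ∈ I, DifferentiableAt ℝ ψ y := fun y hy =>
      (hd.differentiableOn (by simp)).differentiableAt (hI.mem_nhds hy)
    have hcont : ContinuousOn (deriv ψ) I := hd.continuousOn_deriv_of_isOpen hI (by simp)
    set J := I ∩ Icc (r₀ - r / 10) (r₀ + r / 10) with hJ
    have hJc : J.OrdConnected := hc.inter ordConnected_Icc
    have habs : ∀ x ∈ J, |x - r₀| ≤ r / 10 := fun x hx => by
      rw [abs_le]; constructor <;> linarith [hx.2.1, hx.2.2]
    have hsq : ∀ x ∈ J, 1 / 4 ≤ (deriv ψ x) ^ 2 := by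
      intro x hx
      have h1 := hup x hx.1 (habs x hx)
      have h2 := (abs_le.1 (hK x hx.1 (by linarith [habs x hx]))).2
      have h3 := hpos x hx.1
      have h4 : (ψ x) ^ 2 / r ^ 2 ≤ 1 / 4 := by
        rw [div_le_iff₀ (by positivity)]; nlinarith
      linarith
    have hr0J : r₀ ∈ J := ⟨hr0, by constructor <;> linarith⟩
    have hsign : (∀ x ∈ J, 1 / 2 ≤ deriv ψ x) ∨ (∀ x ∈ J, deriv ψ x ≤ -(1 / 2)) := by
      by_contra hcon
      push Not at hcon
      obtain ⟨⟨x, hx, hx1⟩, y, hy, hy1⟩ := hcon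
      have hx2 : deriv ψ x ≤ 0 := by nlinarith [hsq x hx]
      have hy2 : 0 ≤ deriv ψ y := by nlinarith [hsq y hy]
      obtain ⟨z, hz, hz0⟩ := hJc.isPreconnected.intermediate_value hx hy
        (hcont.mono inter_subset_left) (⟨hx2, hy2⟩ : (0:ℝ) ∈ Icc _ _)
      have := hsq z hz
      rw [hz0] at this
      norm_num at this
    have hcJ : ContinuousOn ψ J := hd.continuousOn.mono inter_subset_left
    rcases hsign with hs | hs
    · have hlow : ∀ x ∈ I, r₀ ≤ x → x ≤ r₀ + r / 10 → ψ r₀ + (x - r₀) / 2 ≤ ψ x := by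
        intro x hx h1 h2
        have hxJ : x ∈ J := ⟨hx, by constructor <;> linarith⟩
        have := hJc.convex.mul_sub_le_image_sub_of_le_deriv hcJ
          (fun y hy => (hdiff y (interior_subset hy).1).differentiableWithinAt)
          (fun y hy => hs y (interior_subset hy)) r₀ hr0J x hxJ h1
        linarith
      refine ⟨r₀ + r / 20, fun x hx => ?_⟩
      have hx1 : r₀ ≤ x := by linarith [hx.1]
      have hx2 : x ≤ r₀ + r / 10 := by linarith [hx.2]
      have hxI : x ∈ I := hR (ψ r₀) hp0 x hx1
        (fun y hy h1 h2 => by linarith [hlow y hy h1 (h2.trans hx2)])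
      refine ⟨hxI, habs x ⟨hxI, by linarith, hx2⟩, ?_⟩
      linarith [hlow x hxI hx1 hx2, hx.1]
    · have hlow : ∀ x ∈ I, x ≤ r₀ → r₀ - r / 10 ≤ x → ψ r₀ + (r₀ - x) / 2 ≤ ψ x := by
        intro x hx h1 h2
        have hxJ : x ∈ J := ⟨hx, by constructor <;> linarith⟩
        have := hJc.convex.image_sub_le_mul_sub_of_deriv_le hcJ
          (fun y hy => (hdiff y (interior_subset hy).1).differentiableWithinAt)
          (fun y hy => hs y (interior_subset hy)) x hxJ r₀ hr0J h1
        linarith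
      refine ⟨r₀ - r / 10, fun x hx => ?_⟩
      have hx1 : x ≤ r₀ := by linarith [hx.2]
      have hx2 : r₀ - r / 10 ≤ x := by linarith [hx.1]
      have hxI : x ∈ I := hL (ψ r₀) hp0 x hx1
        (fun y hy h1 h2 => by linarith [hlow y hy h1 (hx2.trans h2)])
      refine ⟨hxI, habs x ⟨hxI, hx2, by linarith⟩, ?_⟩
      linarith [hlow x hxI hx1 hx2, hx.2]

lemma normalize_lip {E : Type*} [NormedAddCommGroup E] [NormedSpace ℝ E] (x y : E) (hy : y ≠ 0) :
    ‖‖x‖⁻¹ • x - ‖y‖⁻¹ • y‖ ≤ 2 * ‖x - y‖ / ‖y‖ := by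
  have hy0 : 0 < ‖y‖ := norm_pos_iff.2 hy
  rcases eq_or_ne x 0 with rfl | hx
  · simp [norm_smul, hy0.ne']
  have hx0 : 0 < ‖x‖ := norm_pos_iff.2 hx
  have h1 : ‖x‖⁻¹ • x - ‖y‖⁻¹ • y = ‖y‖⁻¹ • (x - y) + (‖x‖⁻¹ - ‖y‖⁻¹) • x := by
    module
  rw [h1]
  refine (norm_add_le _ _).trans ?_
  rw [norm_smul, norm_smul, norm_inv, norm_norm]
  have h2 : ‖‖x‖⁻¹ - ‖y‖⁻¹‖ * ‖x‖ = |‖y‖ - ‖x‖| / ‖y‖ := by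
    rw [Real.norm_eq_abs, inv_sub_inv hx0.ne' hy0.ne', abs_div, abs_of_pos (mul_pos hx0 hy0)]
    field_simp
  rw [h2]
  have h3 := abs_norm_sub_norm_le y x
  rw [norm_sub_rev y x] at h3
  calc _ ≤ ‖y‖⁻¹ * ‖x - y‖ + ‖x - y‖ / ‖y‖ := by gcongr
    _ = _ := by field_simp; ring

open scoped Pointwise in
lemma cap_measure (n : ℕ) : ∃ c : ℝ, 0 < c ∧
    ∀ (θ₀ : sphere (0 : EuclideanSpace ℝ (Fin (n + 1))) 1) (η : ℝ), 0 < η → η ≤ 1 →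
      ENNReal.ofReal (c * η ^ n) ≤
        ((volume : Measure (EuclideanSpace ℝ (Fin (n + 1)))).toSphere)
          {θ | ‖(θ : EuclideanSpace ℝ (Fin (n + 1))) - θ₀‖ < η} := by
  refine ⟨(1 / 4) * (1 / (8 * (n + 1))) ^ n, by positivity, fun θ₀ η hη hη1 => ?_⟩
  have hθ0 : ‖(θ₀ : EuclideanSpace ℝ (Fin (n + 1)))‖ = 1 := by simp
  have hmeas : MeasurableSet {θ : sphere (0 : EuclideanSpace ℝ (Fin (n + 1))) 1 |
      ‖(θ : EuclideanSpace ℝ (Fin (n + 1))) - θ₀‖ < η} := by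
    apply IsOpen.measurableSet
    exact isOpen_lt (by fun_prop) continuous_const
  rw [Measure.toSphere_apply' _ hmeas]
  obtain ⟨b, hb⟩ := Orthonormal.exists_orthonormalBasis_extension_of_card_eq (𝕜 := ℝ)
    (E := EuclideanSpace ℝ (Fin (n + 1))) (ι := Fin (n + 1)) (by simp)
    (v := fun _ => (θ₀ : EuclideanSpace ℝ (Fin (n + 1)))) (s := {0}) (by
      constructor
      · intro i; simp
      · intro i j hij; exact absurd (Subsingleton.elim i j) hij)
  have hb0 : b 0 = θ₀ := hb 0 rfl
  set δ : ℝ := η / (16 * (n + 1)) with hδ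
  have hδpos : 0 < δ := by positivity
  set lo : Fin (n + 1) → ℝ := Fin.cons (1 / 4) (fun _ => -δ) with hlo
  set hi : Fin (n + 1) → ℝ := Fin.cons (1 / 2) (fun _ => δ) with hhi
  set B : Set (Fin (n + 1) → ℝ) := Set.pi univ (fun i => Ioo (lo i) (hi i)) with hB
  have hBm : MeasurableSet B := MeasurableSet.univ_pi (fun i => measurableSet_Ioo)
  have hmp := (PiLp.volume_preserving_ofLp (Fin (n + 1))).comp b.measurePreserving_repr
  have hvol : volume ((WithLp.ofLp ∘ b.repr) ⁻¹' B) =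
      ENNReal.ofReal ((1 / 4) * (2 * δ) ^ n) := by
    rw [hmp.measure_preimage hBm.nullMeasurableSet, hB, Real.volume_pi_Ioo, Fin.prod_univ_succ,
      ENNReal.ofReal_mul (by norm_num), ENNReal.ofReal_pow (by positivity)]
    simp only [hlo, hhi, Fin.cons_zero, Fin.cons_succ, Finset.prod_const, Finset.card_univ,
      Fintype.card_fin]
    congr 2
    · norm_num
    · rw [sub_neg_eq_add, two_mul]
  have hsub : (WithLp.ofLp ∘ b.repr) ⁻¹' B ⊆ Ioo (0 : ℝ) 1 •
      (Subtype.val '' {θ : sphere (0 : EuclideanSpace ℝ (Fin (n + 1))) 1 |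
        ‖(θ : EuclideanSpace ℝ (Fin (n + 1))) - θ₀‖ < η}) := by
    intro x hx
    have hx' : ∀ i, lo i < b.repr x i ∧ b.repr x i < hi i := fun i => hx i (mem_univ i)
    have hx0 := hx' 0
    simp only [hlo, hhi, Fin.cons_zero] at hx0
    set s := b.repr x 0 with hs
    have hsum : x = s • (θ₀ : EuclideanSpace ℝ (Fin (n + 1))) +
        ∑ i : Fin n, b.repr x i.succ • b i.succ := by
      conv_lhs => rw [← b.sum_repr x, Fin.sum_univ_succ, hb0]
    have hdist : ‖x - s • (θ₀ : EuclideanSpace ℝ (Fin (n + 1)))‖ ≤ η / 16 := by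
      have h1 : x - s • (θ₀ : EuclideanSpace ℝ (Fin (n + 1))) =
        ∑ i : Fin n, b.repr x i.succ • b i.succ := by
        rw [sub_eq_iff_eq_add']; exact hsum
      rw [h1]
      refine (norm_sum_le_of_le _ (f := fun i : Fin n => b.repr x i.succ • b i.succ)
        (n := fun _ => δ) ?_).trans ?_
      · intro i _
        have h2 := hx' i.succ
        simp only [hlo, hhi, Fin.cons_succ] at h2
        rw [norm_smul, b.norm_eq_one, mul_one, Real.norm_eq_abs]
        exact abs_le.2 ⟨h2.1.le, h2.2.le⟩
      · simp only [Finset.sum_const, Finset.card_univ, Fintype.card_fin, nsmul_eq_mul, hδ]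
        rw [mul_div_assoc', div_le_div_iff₀ (by positivity) (by norm_num)]
        nlinarith
    have hns : ‖s • (θ₀ : EuclideanSpace ℝ (Fin (n + 1)))‖ = s := by
      rw [norm_smul, hθ0, mul_one, Real.norm_eq_abs, abs_of_pos (by linarith)]
    have hne : s • (θ₀ : EuclideanSpace ℝ (Fin (n + 1))) ≠ 0 := by
      rw [← norm_pos_iff, hns]; linarith
    have hxn := abs_le.1 ((abs_norm_sub_norm_le x _).trans hdist)
    rw [hns] at hxn
    have hxpos : 0 < ‖x‖ := by linarith
    have hnl := normalize_lip x _ hne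
    rw [hns, smul_smul, inv_mul_cancel₀ (by linarith : s ≠ 0), one_smul] at hnl
    refine Set.mem_smul.2 ⟨‖x‖, ⟨hxpos, by linarith⟩, ‖x‖⁻¹ • x,
      ⟨⟨‖x‖⁻¹ • x, ?_⟩, ?_, rfl⟩, ?_⟩
    · rw [mem_sphere_zero_iff_norm, norm_smul, norm_inv, norm_norm, inv_mul_cancel₀ hxpos.ne']
    · refine lt_of_le_of_lt hnl ?_
      rw [div_lt_iff₀ (by linarith)]
      nlinarith
    · rw [smul_smul, mul_inv_cancel₀ hxpos.ne', one_smul]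
  calc ENNReal.ofReal ((1 / 4) * (1 / (8 * (n + 1))) ^ n * η ^ n)
      = volume ((WithLp.ofLp ∘ b.repr) ⁻¹' B) := by
        rw [hvol, mul_assoc, ← mul_pow, hδ]
        congr 3
        field_simp
        norm_num
    _ ≤ volume (Ioo (0 : ℝ) 1 •
      (Subtype.val '' {θ : sphere (0 : EuclideanSpace ℝ (Fin (n + 1))) 1 |
        ‖(θ : EuclideanSpace ℝ (Fin (n + 1))) - θ₀‖ < η})) := measure_mono hsub
    _ ≤ _ := by
        apply le_mul_of_one_le_left (by positivity)
        simp

lemma path_bound {E : Type*} [NormedAddCommGroup E] [InnerProductSpace ℝ E]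
    (ψ : ℝ → ℝ) (I : Set ℝ) (hI : I.OrdConnected) (r₀ x M : ℝ) (hr0 : r₀ ∈ I) (hx : x ∈ I)
    (hM : ∀ y ∈ uIcc r₀ x, 0 ≤ ψ y ∧ ψ y ≤ M)
    (θ₀ θ : E) (h0 : ‖θ₀‖ = 1) (h1 : ‖θ‖ = 1) (hθ : ‖θ - θ₀‖ ≤ 1 / 2) :
    ∃ γ : ℝ → ℝ × E, ContDiff ℝ 1 γ ∧ γ 0 = (r₀, θ₀) ∧ γ 1 = (x, θ) ∧
      (∀ t ∈ Icc (0 : ℝ) 1, (γ t).1 ∈ I ∧ ‖(γ t).2‖ = 1) ∧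
      ∫ t in (0 : ℝ)..1, Real.sqrt ((deriv (fun u => (γ u).1) t) ^ 2 +
                      (ψ ((γ t).1)) ^ 2 * ‖deriv (fun u => (γ u).2) t‖ ^ 2) ≤
        |x - r₀| + M * (4 * ‖θ - θ₀‖) := by
  set v : ℝ → E := fun t => θ₀ + t • (θ - θ₀) with hv
  have hv01 : ∀ t ∈ Icc (0 : ℝ) 1, 1 / 2 ≤ ‖v t‖ := by
    intro t ht
    have h2 : ‖t • (θ - θ₀)‖ ≤ 1 / 2 := by
      rw [norm_smul, Real.norm_eq_abs, abs_of_nonneg ht.1]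
      nlinarith [ht.1, ht.2, norm_nonneg (θ - θ₀)]
    have h3 := norm_sub_le (θ₀ + t • (θ - θ₀)) (t • (θ - θ₀))
    rw [add_sub_cancel_right, h0] at h3
    simp only [hv]
    linarith
  have hvne : ∀ t, v t ≠ 0 := by
    intro t ht
    have h2 : (1 - t) • θ₀ = (-t) • θ := by
      have : (1 - t) • θ₀ - (-t) • θ = v t := by simp only [hv]; module
      rw [ht] at this
      exact sub_eq_zero.1 this
    have h3 : |1 - t| = |-t| := by
      have := congrArg norm h2
      simpa [norm_smul, h0, h1] using this
    have h4 : t = 1 / 2 := by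
      rcases abs_eq_abs.1 h3 with h | h <;> linarith
    have h5 := hv01 t (by rw [h4]; constructor <;> norm_num)
    rw [ht, norm_zero] at h5
    norm_num at h5
  have hvc : ContDiff ℝ 1 v := by fun_prop
  have hnc : ContDiff ℝ 1 (fun t => ‖v t‖⁻¹ • v t) :=
    ((hvc.norm ℝ hvne).inv (fun t => norm_ne_zero_iff.2 (hvne t))).smul hvc
  have hseg : ∀ t ∈ Icc (0 : ℝ) 1, r₀ + t * (x - r₀) ∈ uIcc r₀ x := by
    intro t ht
    rw [mem_uIcc]
    rcases le_total r₀ x with h | h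
    · left; constructor <;> nlinarith [ht.1, ht.2]
    · right; constructor <;> nlinarith [ht.1, ht.2]
  refine ⟨fun t => (r₀ + t * (x - r₀), ‖v t‖⁻¹ • v t), ?_, ?_, ?_, ?_, ?_⟩
  · exact ContDiff.prodMk (by fun_prop) hnc
  · simp [hv, h0]
  · simp [hv, h1]
  · intro t ht
    refine ⟨hI.uIcc_subset hr0 hx (hseg t ht), ?_⟩
    simp [norm_smul, hvne t]
  · refine (le_abs_self _).trans ?_
    have := intervalIntegral.norm_integral_le_of_norm_le_const (a := 0) (b := 1)
      (C := |x - r₀| + M * (4 * ‖θ - θ₀‖)) (f := fun t => Real.sqrt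
        ((deriv (fun u => r₀ + u * (x - r₀)) t) ^ 2 + (ψ (r₀ + t * (x - r₀))) ^ 2 *
          ‖deriv (fun u => ‖v u‖⁻¹ • v u) t‖ ^ 2)) ?_
    · simpa using this
    · intro t ht
      rw [uIoc_of_le zero_le_one] at ht
      have ht' : t ∈ Icc (0 : ℝ) 1 := Ioc_subset_Icc_self ht
      have hd1 : deriv (fun u => r₀ + u * (x - r₀)) t = x - r₀ := by
        simp
      have hd2 : ‖deriv (fun u => ‖v u‖⁻¹ • v u) t‖ ≤ 4 * ‖θ - θ₀‖ := by
        refine norm_deriv_le_of_lip' (by positivity) (Eventually.of_forall fun u => ?_)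
        refine (normalize_lip (v u) (v t) (hvne t)).trans ?_
        have h5 : v u - v t = (u - t) • (θ - θ₀) := by simp only [hv]; module
        have h6 := hv01 t ht'
        rw [h5, norm_smul, div_le_iff₀ (by linarith)]
        have : 0 ≤ ‖u - t‖ * ‖θ - θ₀‖ := by positivity
        nlinarith
      obtain ⟨hp, hpM⟩ := hM _ (hseg t ht')
      rw [hd1, Real.norm_eq_abs, abs_of_nonneg (Real.sqrt_nonneg _), Real.sqrt_le_iff]
      have hA : ψ (r₀ + t * (x - r₀)) * ‖deriv (fun u => ‖v u‖⁻¹ • v u) t‖ ≤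
          M * (4 * ‖θ - θ₀‖) := by gcongr; linarith
      have hA0 : 0 ≤ ψ (r₀ + t * (x - r₀)) * ‖deriv (fun u => ‖v u‖⁻¹ • v u) t‖ := by positivity
      refine ⟨by have := abs_nonneg (x - r₀); linarith, ?_⟩
      rw [← mul_pow, ← sq_abs (x - r₀)]
      nlinarith [abs_nonneg (x - r₀)]

/-- Uniform `κ(n)`-noncollapsing for complete rotationally symmetric manifolds not
diffeomorphic to `S¹ × Sⁿ`. Such a manifold is presented in warped-product coordinates:
a (possibly infinite) interval `(a,b)`, a smooth positive warping function `ψ`, with the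
metric `dr² + ψ²(r)g_{Sⁿ}`, closing up smoothly (`ψ → 0`, `ψ' → ±1`) at any finite end
(this covers `ℝ^{n+1}`, `S^{n+1}` and `ℝ × Sⁿ`, and excludes `S¹ × Sⁿ`).
If `|Rm| ≤ r⁻²` on the geodesic ball `B(x₀,r)` — expressed by the curvature bounds
`|1−(ψ')²|/ψ² ≤ r⁻²` and `|ψ''|/ψ ≤ r⁻²` on all slices meeting the ball — then the
Riemannian volume of `B(x₀,r)` (the warped-product measure `ψ(r)ⁿ dr dθ` of the set of
points at warped-product path distance `< r` from `x₀`) is at least `κ rⁿ⁺¹`. -/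
theorem stmt15 (n : ℕ) (hn : 2 ≤ n) :
    ∃ κ : ℝ, 0 < κ ∧
    ∀ (a b : EReal) (ψ : ℝ → ℝ),
      a < b →
      (∀ x : ℝ, a < (x : EReal) → (x : EReal) < b → 0 < ψ x) →
      ContDiffOn ℝ (⊤ : ℕ∞) ψ {x : ℝ | a < (x : EReal) ∧ (x : EReal) < b} →
      (∀ a' : ℝ, a = (a' : EReal) →
        Tendsto ψ (nhdsWithin a' (Ioi a')) (nhds 0) ∧
        Tendsto (deriv ψ) (nhdsWithin a' (Ioi a')) (nhds 1)) →
      (∀ b' : ℝ, b = (b' : EReal) →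
        Tendsto ψ (nhdsWithin b' (Iio b')) (nhds 0) ∧
        Tendsto (deriv ψ) (nhdsWithin b' (Iio b')) (nhds (-1))) →
      ∀ r₀ r : ℝ, 0 < r → a < (r₀ : EReal) → (r₀ : EReal) < b →
      (∀ x : ℝ, a < (x : EReal) → (x : EReal) < b → |x - r₀| < r →
        |1 - (deriv ψ x) ^ 2| / (ψ x) ^ 2 ≤ (r⁻¹) ^ 2 ∧
        |deriv (deriv ψ) x| / ψ x ≤ (r⁻¹) ^ 2) →
      ∀ θ₀ : sphere (0 : EuclideanSpace ℝ (Fin (n + 1))) 1,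
      ENNReal.ofReal (κ * r ^ (n + 1)) ≤
        ∫⁻ p in {p : ℝ × sphere (0 : EuclideanSpace ℝ (Fin (n + 1))) 1 |
            a < (p.1 : EReal) ∧ (p.1 : EReal) < b ∧
            sInf {ℓ : ℝ | ∃ γ : ℝ → ℝ × EuclideanSpace ℝ (Fin (n + 1)),
                ContDiff ℝ 1 γ ∧
                γ 0 = (r₀, (θ₀ : EuclideanSpace ℝ (Fin (n + 1)))) ∧
                γ 1 = (p.1, (p.2 : EuclideanSpace ℝ (Fin (n + 1)))) ∧
                (∀ t ∈ Icc (0 : ℝ) 1,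
                  a < (((γ t).1 : ℝ) : EReal) ∧ (((γ t).1 : ℝ) : EReal) < b ∧
                    ‖(γ t).2‖ = 1) ∧
                ℓ = ∫ t in (0 : ℝ)..1,
                    Real.sqrt ((deriv (fun u => (γ u).1) t) ^ 2 +
                      (ψ ((γ t).1)) ^ 2 * ‖deriv (fun u => (γ u).2) t‖ ^ 2)} < r},
          ENNReal.ofReal ((ψ p.1) ^ n)
          ∂((volume : Measure ℝ).prod
              ((volume : Measure (EuclideanSpace ℝ (Fin (n + 1)))).toSphere)) := by
  obtain ⟨c, hc, hcap⟩ := cap_measure n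
  refine ⟨c / 80 * (1 / 800) ^ n, by positivity, ?_⟩
  intro a b ψ hab hpos hd hendA hendB r₀ r hr har hrb hK θ₀
  set I : Set ℝ := {x : ℝ | a < (x : EReal) ∧ (x : EReal) < b} with hIdef
  have hIopen : IsOpen I :=
    (isOpen_lt continuous_const continuous_coe_real_ereal).inter
      (isOpen_lt continuous_coe_real_ereal continuous_const)
  have hIc : I.OrdConnected := by
    refine ⟨fun x hx y hy z hz => ⟨?_, ?_⟩⟩
    · exact hx.1.trans_le (EReal.coe_le_coe_iff.2 hz.1)
    · exact (EReal.coe_le_coe_iff.2 hz.2).trans_lt hy.2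
  have hr0 : r₀ ∈ I := ⟨har, hrb⟩
  have hR : ∀ m > 0, ∀ x ≥ r₀, (∀ y ∈ I, r₀ ≤ y → y ≤ x → m ≤ ψ y) → x ∈ I := by
    intro m hm x hx h
    by_contra hxI
    have hbx : b ≤ (x : EReal) := by
      by_contra hcon
      exact hxI ⟨har.trans_le (EReal.coe_le_coe_iff.2 hx), not_le.1 hcon⟩
    induction b with
    | bot => exact not_lt_bot hrb
    | top => exact (EReal.coe_lt_top x).not_ge hbx
    | coe b' =>
      have h1 := (hendB b' rfl).1
      have hrb' : r₀ < b' := EReal.coe_lt_coe_iff.1 hrb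
      have hbx' : b' ≤ x := EReal.coe_le_coe_iff.1 hbx
      have h2 : ∀ᶠ y in nhdsWithin b' (Iio b'), m ≤ ψ y := by
        filter_upwards [Ioo_mem_nhdsLT hrb'] with y hy
        exact h y ⟨har.trans (EReal.coe_lt_coe_iff.2 hy.1), EReal.coe_lt_coe_iff.2 hy.2⟩ hy.1.le
          (hy.2.le.trans hbx')
      exact absurd (ge_of_tendsto h1 h2) (not_le.2 hm)
  have hL : ∀ m > 0, ∀ x ≤ r₀, (∀ y ∈ I, y ≤ r₀ → x ≤ y → m ≤ ψ y) → x ∈ I := by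
    intro m hm x hx h
    by_contra hxI
    have hax : (x : EReal) ≤ a := by
      by_contra hcon
      exact hxI ⟨not_le.1 hcon, (EReal.coe_le_coe_iff.2 hx).trans_lt hrb⟩
    induction a with
    | bot => exact (EReal.bot_lt_coe x).not_ge hax
    | top => exact not_top_lt har
    | coe a' =>
      have h1 := (hendA a' rfl).1
      have har' : a' < r₀ := EReal.coe_lt_coe_iff.1 har
      have hax' : x ≤ a' := EReal.coe_le_coe_iff.1 hax
      have h2 : ∀ᶠ y in nhdsWithin a' (Ioi a'), m ≤ ψ y := by
        filter_upwards [Ioo_mem_nhdsGT har'] with y hy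
        exact h y ⟨EReal.coe_lt_coe_iff.2 hy.1, (EReal.coe_lt_coe_iff.2 hy.2).trans hrb⟩ hy.2.le
          (hax'.trans hy.1.le)
      exact absurd (ge_of_tendsto h1 h2) (not_le.2 hm)
  have hposI : ∀ x ∈ I, 0 < ψ x := fun x hx => hpos x hx.1 hx.2
  have hK' : ∀ x ∈ I, |x - r₀| < r → |1 - (deriv ψ x) ^ 2| ≤ (ψ x) ^ 2 / r ^ 2 := by
    intro x hx hxr
    have h1 := (hK x hx.1 hx.2 hxr).1
    have hp := hposI x hx
    rw [div_le_iff₀ (by positivity)] at h1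
    rw [inv_pow, inv_mul_eq_div] at h1
    exact h1
  obtain ⟨hM, x₁, hx₁⟩ := ode_main I hIopen hIc ψ hposI hd r₀ r hr hr0 hR hL hK'
  have hp0 := hposI r₀ hr0
  set N := r + ψ r₀ with hN
  have hNpos : 0 < N := by positivity
  set η := r / (16 * N) with hη
  have hηpos : 0 < η := by positivity
  have hη1 : η ≤ 1 / 16 := by
    rw [hη, div_le_div_iff₀ (by positivity) (by norm_num)]; linarith
  have hNη : N * η = r / 16 := by rw [hη]; field_simp
  have hcapη := hcap θ₀ η hηpos (by linarith)
  set C : Set (sphere (0 : EuclideanSpace ℝ (Fin (n + 1))) 1) :=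
    {θ | ‖(θ : EuclideanSpace ℝ (Fin (n + 1))) - θ₀‖ < η} with hC
  have hCm : MeasurableSet C :=
    (isOpen_lt (by fun_prop) continuous_const).measurableSet
  calc ENNReal.ofReal (c / 80 * (1 / 800) ^ n * r ^ (n + 1))
      = ENNReal.ofReal ((N / 50) ^ n) * (ENNReal.ofReal (r / 80) *
          ENNReal.ofReal (c * η ^ n)) := by
        rw [← ENNReal.ofReal_mul (by positivity), ← ENNReal.ofReal_mul (by positivity)]
        congr 1
        have : (N / 50) ^ n * η ^ n = (1 / 800) ^ n * r ^ n := by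
          rw [← mul_pow, ← mul_pow]; congr 1; linarith
        calc _ = c / 80 * r * ((1 / 800) ^ n * r ^ n) := by ring
          _ = c / 80 * r * ((N / 50) ^ n * η ^ n) := by rw [this]
          _ = _ := by ring
    _ ≤ ENNReal.ofReal ((N / 50) ^ n) * (((volume : Measure ℝ).prod
              ((volume : Measure (EuclideanSpace ℝ (Fin (n + 1)))).toSphere))
                (Icc x₁ (x₁ + r / 80) ×ˢ C)) := by
        rw [Measure.prod_prod, Real.volume_Icc, add_sub_cancel_left]
        gcongr
    _ = ∫⁻ p in Icc x₁ (x₁ + r / 80) ×ˢ C, ENNReal.ofReal ((N / 50) ^ n)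
          ∂((volume : Measure ℝ).prod
              ((volume : Measure (EuclideanSpace ℝ (Fin (n + 1)))).toSphere)) := by
        rw [setLIntegral_const]
    _ ≤ ∫⁻ p in Icc x₁ (x₁ + r / 80) ×ˢ C, ENNReal.ofReal ((ψ p.1) ^ n)
          ∂((volume : Measure ℝ).prod
              ((volume : Measure (EuclideanSpace ℝ (Fin (n + 1)))).toSphere)) := by
        refine setLIntegral_mono' (measurableSet_Icc.prod hCm) ?_
        intro p hp
        have := (hx₁ p.1 hp.1).2.2
        gcongr
    _ ≤ _ := by
        refine lintegral_mono_set ?_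
        rintro ⟨x, θ⟩ ⟨hx, hθ⟩
        obtain ⟨hxI, hxr, -⟩ := hx₁ x hx
        refine ⟨hxI.1, hxI.2, ?_⟩
        have hθ' : ‖(θ : EuclideanSpace ℝ (Fin (n + 1))) - θ₀‖ < η := hθ
        obtain ⟨γ, hγ, hγ0, hγ1, hγI, hγl⟩ := path_bound ψ I hIc r₀ x (2 * N) hr0 hxI
          (fun y hy => by
            have hyI := hIc.uIcc_subset hr0 hxI hy
            refine ⟨(hposI y hyI).le, hM y hyI (le_trans ?_ hxr)⟩
            exact abs_sub_left_of_mem_uIcc hy)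
          (θ₀ : EuclideanSpace ℝ (Fin (n + 1))) θ (by simp) (by simp) (by linarith)
        refine csInf_lt_of_lt ⟨0, ?_⟩ ⟨γ, hγ, hγ0, hγ1, fun t ht =>
          ⟨(hγI t ht).1.1, (hγI t ht).1.2, (hγI t ht).2⟩, rfl⟩ ?_
        · rintro ℓ ⟨γ', -, -, -, -, rfl⟩
          exact intervalIntegral.integral_nonneg zero_le_one (fun t _ => Real.sqrt_nonneg _)
        · refine lt_of_le_of_lt hγl ?_
          have : 2 * N * (4 * ‖(θ : EuclideanSpace ℝ (Fin (n + 1))) - θ₀‖) ≤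
            2 * N * (4 * η) := by gcongr
          nlinarith
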